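/- Let Φ be a quantum channel on n×n complex matrices with Kraus operators {K_j}, and let x, x⊥ ∈ ℂⁿ be orthogonal unit vectors such that Φ(x⊥ x⊥†) Z x = 0 and Φ(x x†) Z x = 0 for every n×n matrix Z in the Hilbert–Schmidt orthogonal complement K_Φ^⊥ of span{K_j}. Then there exists λ ∈ (0,1) such that Φ ∘ Ψ_{λ,x,x⊥}^{-1} is completely positive (and hence Φ = (Φ ∘ Ψ_{λ,x,x⊥}^{-1}) ∘ Ψ_{λ,x,x⊥} is a factorization into quantum channels). -/

import Mathlib

open Matrix Kronecker
open scoped ComplexOrder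

noncomputable section

/-- The linear map `ρ ↦ A ρ Bᴴ`. -/
def sandwich₂ {m n : ℕ} (A B : Matrix (Fin m) (Fin n) ℂ) :
    Matrix (Fin n) (Fin n) ℂ →ₗ[ℂ] Matrix (Fin m) (Fin m) ℂ where
  toFun ρ := A * ρ * Bᴴ
  map_add' X Y := by simp [Matrix.mul_add, Matrix.add_mul]
  map_smul' c X := by simp [Matrix.mul_smul, Matrix.smul_mul]

/-- The linear map `ρ ↦ A ρ Aᴴ`. -/
def sandwich {m n : ℕ} (A : Matrix (Fin m) (Fin n) ℂ) :
    Matrix (Fin n) (Fin n) ℂ →ₗ[ℂ] Matrix (Fin m) (Fin m) ℂ :=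
  sandwich₂ A A

/-- The Choi matrix `C(Φ) = ∑ⱼₖ Eⱼₖ ⊗ Φ(Eⱼₖ)`. -/
def Choi {n m : ℕ} (Φ : Matrix (Fin n) (Fin n) ℂ →ₗ[ℂ] Matrix (Fin m) (Fin m) ℂ) :
    Matrix (Fin n × Fin m) (Fin n × Fin m) ℂ :=
  ∑ j : Fin n, ∑ k : Fin n,
    (Matrix.single j k (1 : ℂ)) ⊗ₖ Φ (Matrix.single j k (1 : ℂ))

/-- Vectorization: `vec X = ∑ⱼ eⱼ ⊗ X eⱼ`, i.e. `(vec X) (j, i) = X i j`. -/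
def vec {m n : ℕ} (X : Matrix (Fin m) (Fin n) ℂ) : Fin n × Fin m → ℂ :=
  fun p => X p.2 p.1

/-- Complete positivity (via the Choi characterization). -/
def IsCP {n : ℕ} (Φ : Matrix (Fin n) (Fin n) ℂ →ₗ[ℂ] Matrix (Fin n) (Fin n) ℂ) : Prop :=
  (Choi Φ).PosSemidef

/-- Trace preservation. -/
def IsTP {n : ℕ} (Φ : Matrix (Fin n) (Fin n) ℂ →ₗ[ℂ] Matrix (Fin n) (Fin n) ℂ) : Prop :=
  ∀ ρ, (Φ ρ).trace = ρ.trace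

/-- Quantum channel: completely positive and trace preserving. -/
def IsChannel {n : ℕ} (Φ : Matrix (Fin n) (Fin n) ℂ →ₗ[ℂ] Matrix (Fin n) (Fin n) ℂ) : Prop :=
  IsCP Φ ∧ IsTP Φ

/-- `K_λ = 1 - (1 - √(1-λ)) x x†`. -/
def Kmat {n : ℕ} (lam : ℝ) (x : Fin n → ℂ) : Matrix (Fin n) (Fin n) ℂ :=
  1 - ((1 - Real.sqrt (1 - lam) : ℝ) : ℂ) • Matrix.vecMulVec x (star x)

/-- `L_λ = √λ y x†`. -/
def Lmat {n : ℕ} (lam : ℝ) (x y : Fin n → ℂ) : Matrix (Fin n) (Fin n) ℂ :=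
  ((Real.sqrt lam : ℝ) : ℂ) • Matrix.vecMulVec y (star x)

/-- The elementary channel `Ψ_{λ,x,y} = K_λ (·) K_λ† + L_λ (·) L_λ†`. -/
def Psi {n : ℕ} (lam : ℝ) (x y : Fin n → ℂ) :
    Matrix (Fin n) (Fin n) ℂ →ₗ[ℂ] Matrix (Fin n) (Fin n) ℂ :=
  sandwich (Kmat lam x) + sandwich (Lmat lam x y)

/-- For `λ ∈ [0,1)` and `⟨x,y⟩ = 0`, the inverse of `Ψ_{λ,x,y}`:
`Ψ_{λ,x,y}⁻¹ = K_λ⁻¹ (·) K_λ⁻¹ - (1-λ)⁻¹ L_λ (·) L_λ†`. -/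
def PsiInv {n : ℕ} (lam : ℝ) (x y : Fin n → ℂ) :
    Matrix (Fin n) (Fin n) ℂ →ₗ[ℂ] Matrix (Fin n) (Fin n) ℂ :=
  sandwich (Kmat lam x)⁻¹ - (((1 - lam)⁻¹ : ℝ) : ℂ) • sandwich (Lmat lam x y)

/-- `Φ` is conjugation by a unitary. -/
def IsUnitaryConj {n : ℕ} (Φ : Matrix (Fin n) (Fin n) ℂ →ₗ[ℂ] Matrix (Fin n) (Fin n) ℂ) : Prop :=
  ∃ U ∈ Matrix.unitaryGroup (Fin n) ℂ, ∀ ρ, Φ ρ = U * ρ * Uᴴ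

/-- A quantum channel is divisible if it factors into two channels neither of which is
a unitary conjugation. -/
def Divisible {n : ℕ} (Φ : Matrix (Fin n) (Fin n) ℂ →ₗ[ℂ] Matrix (Fin n) (Fin n) ℂ) : Prop :=
  ∃ Φ₁ Φ₂ : Matrix (Fin n) (Fin n) ℂ →ₗ[ℂ] Matrix (Fin n) (Fin n) ℂ,
    IsChannel Φ₁ ∧ IsChannel Φ₂ ∧ Φ = Φ₁ ∘ₗ Φ₂ ∧ ¬ IsUnitaryConj Φ₁ ∧ ¬ IsUnitaryConj Φ₂

/-- `Z = conj(x) conj(x⊥)† ⊗ 1`. -/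
def Zmat {n : ℕ} (x xp : Fin n → ℂ) : Matrix (Fin n × Fin n) (Fin n × Fin n) ℂ :=
  (Matrix.vecMulVec (star x) xp) ⊗ₖ (1 : Matrix (Fin n) (Fin n) ℂ)

/-!
Write `U` for the matrix whose columns are the vectorized Kraus operators `K j`, so that
`C(Φ) = U Uᴴ`. The operators `K j * y xᴴ` with `y ∈ {x, xp}` are orthogonal to every `Z` in the
orthogonal complement of the Kraus subspace, hence lie in it, so that the corresponding matrices
factor as `U G` and `U H`. Consequently `C(Φ ∘ Ψ⁻¹) = U ((1 + c G) (1 + c G)ᴴ - μ H Hᴴ) Uᴴ` with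
`c = (1 - λ)^(-1/2) - 1` and `μ = λ / (1 - λ)`. The middle factor is Hermitian and tends to `1` as
`λ → 0⁺`, so it is positive semidefinite for all small `λ > 0`.
-/

open Filter Topology

section LinearAlgebra

theorem exists_comp_eq_of_ker_le {𝕜 V E F : Type*} [DivisionRing 𝕜] [AddCommGroup V]
    [Module 𝕜 V] [AddCommGroup E] [Module 𝕜 E] [AddCommGroup F] [Module 𝕜 F]
    {f : V →ₗ[𝕜] E} {g : V →ₗ[𝕜] F} (h : f.ker ≤ g.ker) : ∃ u : E →ₗ[𝕜] F, u ∘ₗ f = g := by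
  obtain ⟨u, hu⟩ := LinearMap.exists_extend
    (f.ker.liftQ g h ∘ₗ f.quotKerEquivRange.symm.toLinearMap)
  refine ⟨u, LinearMap.ext fun v => ?_⟩
  simpa using LinearMap.congr_fun hu ⟨f v, f.mem_range_self v⟩

variable {ι κ : Type*} [Fintype κ]

theorem exists_eq_mul_of_conjTranspose_mulVec_eq_zero {𝕜 κ' : Type*} [Field 𝕜] [StarRing 𝕜]
    [Fintype ι] [Finite κ'] {U : Matrix ι κ 𝕜} {V : Matrix ι κ' 𝕜}
    (h : ∀ w, Uᴴ *ᵥ w = 0 → Vᴴ *ᵥ w = 0) :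
    ∃ G : Matrix κ κ' 𝕜, V = U * G := by
  classical
  have := Fintype.ofFinite κ'
  obtain ⟨u, hu⟩ := exists_comp_eq_of_ker_le (f := toLin' Uᴴ) (g := toLin' Vᴴ) h
  refine ⟨(LinearMap.toMatrix' u)ᴴ, conjTranspose_injective ?_⟩
  calc Vᴴ = LinearMap.toMatrix' (u ∘ₗ toLin' Uᴴ) := by rw [hu, LinearMap.toMatrix'_toLin']
    _ = LinearMap.toMatrix' u * Uᴴ := by
      rw [LinearMap.toMatrix'_comp, LinearMap.toMatrix'_toLin']
    _ = (U * (LinearMap.toMatrix' u)ᴴ)ᴴ := by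
      rw [conjTranspose_mul, conjTranspose_conjTranspose]

theorem sum_vecMulVec_col_star {R : Type*} [NonUnitalNonAssocSemiring R] [Star R]
    (V : Matrix ι κ R) : ∑ j, vecMulVec (V.col j) (star (V.col j)) = V * Vᴴ := by
  ext i k
  simp [Matrix.sum_apply, vecMulVec_apply, mul_apply]

theorem isIdempotentElem_vecMulVec_star {R : Type*} [Semiring R] [Star R] {x : κ → R}
    (hx : star x ⬝ᵥ x = 1) : IsIdempotentElem (vecMulVec x (star x)) := by
  rw [IsIdempotentElem, vecMulVec_mul_vecMulVec, hx, one_smul]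

theorem one_sub_smul_mul_one_add_smul {𝕜 A : Type*} [Field 𝕜] [Ring A] [Algebra 𝕜 A] {p : A}
    (hp : IsIdempotentElem p) {s : 𝕜} (hs : s ≠ 0) :
    (1 - (1 - s) • p) * (1 + (s⁻¹ - 1) • p) = 1 := by
  simp only [sub_mul, mul_add, one_mul, mul_one, smul_mul_assoc, mul_smul_comm, hp.eq]
  match_scalars
  · ring
  · field_simp
    ring

end LinearAlgebra

section Positivity

variable {τ κ : Type*} {l : Filter τ}

theorem eventually_nonneg_of_tendsto_one {A : Type*} [CStarAlgebra A] [PartialOrder A]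
    [StarOrderedRing A] {f : τ → A} (hsa : ∀ t, IsSelfAdjoint (f t)) (hf : Tendsto f l (𝓝 1)) :
    ∀ᶠ t in l, 0 ≤ f t := by
  filter_upwards [hf.eventually (Metric.closedBall_mem_nhds 1 one_pos)] with t ht
  rw [dist_eq_norm_sub'] at ht
  have hle : 1 - f t ≤ 1 := calc
    1 - f t ≤ algebraMap ℝ A ‖1 - f t‖ :=
      ((IsSelfAdjoint.one A).sub (hsa t)).le_algebraMap_norm_self
    _ ≤ algebraMap ℝ A 1 := algebraMap_mono A ht
    _ = 1 := map_one _
  exact sub_le_self_iff 1 |>.1 hle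

variable [DecidableEq κ]

open scoped MatrixOrder Matrix.Norms.L2Operator in
theorem eventually_posSemidef_of_tendsto_one [Finite κ] {M : τ → Matrix κ κ ℂ}
    (hM : ∀ t, (M t).IsHermitian) (h : Tendsto M l (𝓝 1)) : ∀ᶠ t in l, (M t).PosSemidef := by
  have := Fintype.ofFinite κ
  simp only [← nonneg_iff_posSemidef]
  exact eventually_nonneg_of_tendsto_one hM h

theorem eventually_posSemidef_one_add_smul {κ' : Type*} [Fintype κ] [Fintype κ'] (G : Matrix κ κ ℂ)
    (H : Matrix κ κ' ℂ) {c μ : τ → ℝ} (hc : Tendsto c l (𝓝 0)) (hμ : Tendsto μ l (𝓝 0)) :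
    ∀ᶠ t in l, ((1 + c t • G) * (1 + c t • G)ᴴ - μ t • (H * Hᴴ)).PosSemidef := by
  refine eventually_posSemidef_of_tendsto_one (fun t => ?_) ?_
  · exact (isHermitian_mul_conjTranspose_self _).sub
      ((isHermitian_mul_conjTranspose_self H).smul (IsSelfAdjoint.all (μ t)))
  · have hcont : Continuous fun p : ℝ × ℝ =>
        (1 + p.1 • G) * (1 + p.1 • G)ᴴ - p.2 • (H * Hᴴ) := by fun_prop
    simpa [Function.comp_def] using (hcont.tendsto (0, 0)).comp (hc.prodMk_nhds hμ)

end Positivity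

section Sandwich

variable {m n p : ℕ}

@[simp]
theorem sandwich_apply (A : Matrix (Fin m) (Fin n) ℂ) (ρ : Matrix (Fin n) (Fin n) ℂ) :
    sandwich A ρ = A * ρ * Aᴴ :=
  rfl

theorem sandwich_one : sandwich (1 : Matrix (Fin n) (Fin n) ℂ) = LinearMap.id := by
  ext1 ρ
  simp

theorem sandwich_comp_sandwich (A : Matrix (Fin p) (Fin m) ℂ) (B : Matrix (Fin m) (Fin n) ℂ) :
    sandwich A ∘ₗ sandwich B = sandwich (A * B) := by
  ext1 ρ
  simp [Matrix.mul_assoc]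

theorem sandwich_real_smul (c : ℝ) (A : Matrix (Fin m) (Fin n) ℂ) :
    sandwich (c • A) = c ^ 2 • sandwich A := by
  ext1 ρ
  simp [smul_smul, sq]

end Sandwich

section Kraus

variable {m n p : ℕ} {κ : Type*}

/-- The map `ρ ↦ ∑ j, K j ρ (K j)ᴴ` with Kraus operators `K j`. -/
def krausMap [Fintype κ] (K : κ → Matrix (Fin m) (Fin n) ℂ) :
    Matrix (Fin n) (Fin n) ℂ →ₗ[ℂ] Matrix (Fin m) (Fin m) ℂ :=
  ∑ j, sandwich (K j)

/-- The matrix whose columns are the vectorized Kraus operators; its column space is the Kraus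
subspace. -/
def krausMatrix (K : κ → Matrix (Fin m) (Fin n) ℂ) : Matrix (Fin n × Fin m) κ ℂ :=
  Matrix.of fun q j => (K j).vec q

theorem conjTranspose_krausMatrix_mulVec_vec (K : κ → Matrix (Fin m) (Fin n) ℂ)
    (Z : Matrix (Fin m) (Fin n) ℂ) :
    (krausMatrix K)ᴴ *ᵥ Z.vec = fun j => ((K j)ᴴ * Z).trace :=
  funext fun j => star_vec_dotProduct_vec (K j) Z

theorem Choi_apply (Φ : Matrix (Fin n) (Fin n) ℂ →ₗ[ℂ] Matrix (Fin m) (Fin m) ℂ)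
    (q q' : Fin n × Fin m) : Choi Φ q q' = Φ (Matrix.single q.1 q'.1 1) q.2 q'.2 := by
  simp only [Choi, Matrix.sum_apply, kroneckerMap_apply]
  rw [Finset.sum_eq_single q.1, Finset.sum_eq_single q'.1] <;>
    simp +contextual [Matrix.single_apply]

theorem Choi_sub_real_smul (Φ Φ' : Matrix (Fin n) (Fin n) ℂ →ₗ[ℂ] Matrix (Fin m) (Fin m) ℂ)
    (c : ℝ) : Choi (Φ - c • Φ') = Choi Φ - c • Choi Φ' := by
  ext q q'
  simp [Choi_apply]

theorem Choi_sandwich (A : Matrix (Fin m) (Fin n) ℂ) :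
    Choi (sandwich A) = vecMulVec A.vec (star A.vec) := by
  ext q q'
  simp [Choi_apply, vecMulVec_apply, Matrix.mul_apply, Matrix.single_apply, ite_and]

variable [Fintype κ]

theorem krausMap_apply (K : κ → Matrix (Fin m) (Fin n) ℂ) (ρ : Matrix (Fin n) (Fin n) ℂ) :
    krausMap K ρ = ∑ j, K j * ρ * (K j)ᴴ := by
  simp [krausMap]

theorem krausMap_comp_sandwich (K : κ → Matrix (Fin p) (Fin m) ℂ)
    (A : Matrix (Fin m) (Fin n) ℂ) :
    krausMap K ∘ₗ sandwich A = krausMap fun j => K j * A := by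
  ext1 ρ
  simp [krausMap_apply, Matrix.mul_assoc]

theorem Choi_krausMap (K : κ → Matrix (Fin m) (Fin n) ℂ) :
    Choi (krausMap K) = krausMatrix K * (krausMatrix K)ᴴ := by
  calc Choi (krausMap K) = ∑ j, Choi (sandwich (K j)) := by
        ext q q'
        simp [Choi_apply, krausMap, Matrix.sum_apply]
    _ = ∑ j, vecMulVec ((krausMatrix K).col j) (star ((krausMatrix K).col j)) :=
        Finset.sum_congr rfl fun j _ => Choi_sandwich (K j)
    _ = krausMatrix K * (krausMatrix K)ᴴ := sum_vecMulVec_col_star _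

theorem krausMap_vecMulVec_mul_mulVec_eq_zero_iff (K : κ → Matrix (Fin m) (Fin n) ℂ)
    (y : Fin n → ℂ) (Z : Matrix (Fin m) (Fin p) ℂ) (x : Fin p → ℂ) :
    (krausMap K (vecMulVec y (star y)) * Z) *ᵥ x = 0 ↔
      ∀ j, ((K j * vecMulVec y (star x))ᴴ * Z).trace = 0 := by
  let V : Matrix (Fin m) κ ℂ := Matrix.of fun i j => (K j *ᵥ y) i
  have hV : krausMap K (vecMulVec y (star y)) = V * Vᴴ := by
    rw [krausMap_apply, ← sum_vecMulVec_col_star]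
    refine Finset.sum_congr rfl fun j _ => ?_
    rw [mul_vecMulVec, vecMulVec_mul, ← star_mulVec]
    rfl
  have htrace (j : κ) : ((K j * vecMulVec y (star x))ᴴ * Z).trace = (Vᴴ *ᵥ (Z *ᵥ x)) j := by
    rw [mul_vecMulVec, conjTranspose_vecMulVec, star_star, vecMulVec_mul, trace_vecMulVec,
      dotProduct_comm, ← dotProduct_mulVec]
    rfl
  rw [hV, ← mulVec_mulVec, self_mul_conjTranspose_mulVec_eq_zero, funext_iff]
  simp only [htrace, Pi.zero_apply]

theorem exists_krausMatrix_mul_vecMulVec_eq_mul {K : κ → Matrix (Fin m) (Fin n) ℂ}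
    {x y : Fin n → ℂ}
    (h : ∀ Z : Matrix (Fin m) (Fin n) ℂ, (∀ j, ((K j)ᴴ * Z).trace = 0) →
      (krausMap K (vecMulVec y (star y)) * Z) *ᵥ x = 0) :
    ∃ G : Matrix κ κ ℂ, krausMatrix (fun j => K j * vecMulVec y (star x)) = krausMatrix K * G := by
  refine exists_eq_mul_of_conjTranspose_mulVec_eq_zero fun w hw => ?_
  obtain ⟨Z, rfl⟩ := vec_bijective.surjective w
  rw [conjTranspose_krausMatrix_mulVec_vec] at hw ⊢
  exact funext ((krausMap_vecMulVec_mul_mulVec_eq_zero_iff K y Z x).1 (h Z (congrFun hw)))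

end Kraus

section ElementaryChannel

variable {n : ℕ} {lam : ℝ} {x y : Fin n → ℂ}

theorem Lmat_eq (lam : ℝ) (x y : Fin n → ℂ) : Lmat lam x y = √lam • vecMulVec y (star x) :=
  Complex.coe_smul _ _

theorem Kmat_eq (lam : ℝ) (x : Fin n → ℂ) :
    Kmat lam x = 1 - (1 - √(1 - lam)) • vecMulVec x (star x) :=
  congrArg (1 - ·) (Complex.coe_smul _ _)

theorem Kmat_mul (hlam : lam < 1) (hx : star x ⬝ᵥ x = 1) :
    Kmat lam x * (1 + ((√(1 - lam))⁻¹ - 1) • vecMulVec x (star x)) = 1 := by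
  rw [Kmat_eq]
  exact one_sub_smul_mul_one_add_smul (isIdempotentElem_vecMulVec_star hx)
    (Real.sqrt_ne_zero'.2 (sub_pos.2 hlam))

theorem Kmat_inv (hlam : lam < 1) (hx : star x ⬝ᵥ x = 1) :
    (Kmat lam x)⁻¹ = 1 + ((√(1 - lam))⁻¹ - 1) • vecMulVec x (star x) :=
  inv_eq_right_inv (Kmat_mul hlam hx)

theorem Kmat_inv_mul_Kmat (hlam : lam < 1) (hx : star x ⬝ᵥ x = 1) :
    (Kmat lam x)⁻¹ * Kmat lam x = 1 := by
  rw [Kmat_inv hlam hx]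
  exact mul_eq_one_comm.1 (Kmat_mul hlam hx)

theorem Kmat_inv_mul_Lmat (hlam : lam < 1) (hx : star x ⬝ᵥ x = 1) (hxy : star x ⬝ᵥ y = 0) :
    (Kmat lam x)⁻¹ * Lmat lam x y = Lmat lam x y := by
  simp [Kmat_inv hlam hx, Lmat_eq, add_mul, vecMulVec_mul_vecMulVec, hxy]

theorem Lmat_mul_Kmat (hx : star x ⬝ᵥ x = 1) :
    Lmat lam x y * Kmat lam x = √(1 - lam) • Lmat lam x y := by
  simp only [Lmat_eq, Kmat_eq, mul_sub, mul_one, smul_mul_assoc, mul_smul_comm,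
    vecMulVec_mul_vecMulVec, hx, one_smul]
  module

theorem Lmat_mul_Lmat (hxy : star x ⬝ᵥ y = 0) : Lmat lam x y * Lmat lam x y = 0 := by
  simp [Lmat_eq, vecMulVec_mul_vecMulVec, hxy]

theorem PsiInv_eq (lam : ℝ) (x y : Fin n → ℂ) :
    PsiInv lam x y = sandwich (Kmat lam x)⁻¹ - (1 - lam)⁻¹ • sandwich (Lmat lam x y) := by
  ext1 ρ
  simp only [PsiInv, LinearMap.sub_apply, LinearMap.smul_apply, Complex.coe_smul]

theorem PsiInv_comp_Psi (hlam : lam < 1) (hx : star x ⬝ᵥ x = 1) (hxy : star x ⬝ᵥ y = 0) :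
    PsiInv lam x y ∘ₗ Psi lam x y = LinearMap.id := by
  have hpos : 0 < 1 - lam := sub_pos.2 hlam
  have hzero : sandwich (0 : Matrix (Fin n) (Fin n) ℂ) = 0 := by ext1 ρ; simp
  simp only [PsiInv_eq, Psi, LinearMap.comp_add, LinearMap.sub_comp,
    LinearMap.smul_comp, sandwich_comp_sandwich, Kmat_inv_mul_Kmat hlam hx,
    Kmat_inv_mul_Lmat hlam hx hxy, Lmat_mul_Kmat hx, Lmat_mul_Lmat hxy, sandwich_one, hzero,
    sandwich_real_smul, Real.sq_sqrt hpos.le, smul_smul, inv_mul_cancel₀ hpos.ne']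
  module

variable {κ : Type*} [Fintype κ]

theorem krausMap_comp_PsiInv (K : κ → Matrix (Fin n) (Fin n) ℂ) (hlam : 0 ≤ lam)
    (x y : Fin n → ℂ) :
    krausMap K ∘ₗ PsiInv lam x y = krausMap (fun j => K j * (Kmat lam x)⁻¹) -
      (lam / (1 - lam)) • krausMap (fun j => K j * vecMulVec y (star x)) := by
  simp only [PsiInv_eq, Lmat_eq, sandwich_real_smul, Real.sq_sqrt hlam,
    LinearMap.comp_sub, LinearMap.comp_smul, krausMap_comp_sandwich, smul_smul, div_eq_inv_mul]

theorem Choi_krausMap_comp_PsiInv [DecidableEq κ] {K : κ → Matrix (Fin n) (Fin n) ℂ}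
    {G H : Matrix κ κ ℂ}
    (hG : krausMatrix (fun j => K j * vecMulVec x (star x)) = krausMatrix K * G)
    (hH : krausMatrix (fun j => K j * vecMulVec y (star x)) = krausMatrix K * H)
    (hlam₀ : 0 ≤ lam) (hlam₁ : lam < 1) (hx : star x ⬝ᵥ x = 1) :
    Choi (krausMap K ∘ₗ PsiInv lam x y) = krausMatrix K *
      ((1 + ((√(1 - lam))⁻¹ - 1) • G) * (1 + ((√(1 - lam))⁻¹ - 1) • G)ᴴ -
        (lam / (1 - lam)) • (H * Hᴴ)) * (krausMatrix K)ᴴ := by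
  set c := (√(1 - lam))⁻¹ - 1 with hc
  have hinv : krausMatrix (fun j => K j * (Kmat lam x)⁻¹) = krausMatrix K * (1 + c • G) := calc
    krausMatrix (fun j => K j * (Kmat lam x)⁻¹)
      = krausMatrix K + c • krausMatrix (fun j => K j * vecMulVec x (star x)) := by
        ext q j
        simp [krausMatrix, Kmat_inv hlam₁ hx, mul_add, ← hc]
    _ = krausMatrix K * (1 + c • G) := by
        rw [hG, Matrix.mul_add, Matrix.mul_one, Matrix.mul_smul]
  rw [krausMap_comp_PsiInv K hlam₀, Choi_sub_real_smul, Choi_krausMap, Choi_krausMap, hinv, hH]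
  simp only [conjTranspose_mul, Matrix.mul_assoc, Matrix.mul_sub, Matrix.sub_mul,
    Matrix.mul_smul, Matrix.smul_mul]

theorem eventually_isCP_krausMap_comp_PsiInv {K : κ → Matrix (Fin n) (Fin n) ℂ}
    {G H : Matrix κ κ ℂ}
    (hG : krausMatrix (fun j => K j * vecMulVec x (star x)) = krausMatrix K * G)
    (hH : krausMatrix (fun j => K j * vecMulVec y (star x)) = krausMatrix K * H)
    (hx : star x ⬝ᵥ x = 1) :
    ∀ᶠ lam in 𝓝[>] (0 : ℝ), IsCP (krausMap K ∘ₗ PsiInv lam x y) := by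
  classical
  have hc : ContinuousAt (fun lam : ℝ => (√(1 - lam))⁻¹ - 1) 0 := by fun_prop (disch := simp)
  have hμ : ContinuousAt (fun lam : ℝ => lam / (1 - lam)) 0 := by fun_prop (disch := simp)
  filter_upwards [Ioo_mem_nhdsGT one_pos, nhdsWithin_le_nhds <|
    eventually_posSemidef_one_add_smul G H (by simpa using hc.tendsto) (by simpa using hμ.tendsto)]
    with lam hlam hpos
  rw [IsCP, Choi_krausMap_comp_PsiInv hG hH hlam.1.le hlam.2 hx]
  exact hpos.mul_mul_conjTranspose_same _

end ElementaryChannel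

theorem sufficient_criterion_general {n : ℕ} {κ : Type*} [Fintype κ]
    (K : κ → Matrix (Fin n) (Fin n) ℂ) (x y : Fin n → ℂ)
    (hx : star x ⬝ᵥ x = 1) (hxy : star x ⬝ᵥ y = 0)
    (hcond : ∀ Z : Matrix (Fin n) (Fin n) ℂ, (∀ j, ((K j)ᴴ * Z).trace = 0) →
      (krausMap K (vecMulVec y (star y)) * Z) *ᵥ x = 0 ∧
      (krausMap K (vecMulVec x (star x)) * Z) *ᵥ x = 0) :
    ∀ᶠ lam in 𝓝[>] (0 : ℝ), IsCP (krausMap K ∘ₗ PsiInv lam x y) ∧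
      krausMap K = (krausMap K ∘ₗ PsiInv lam x y) ∘ₗ Psi lam x y := by
  obtain ⟨G, hG⟩ := exists_krausMatrix_mul_vecMulVec_eq_mul fun Z hZ => (hcond Z hZ).2
  obtain ⟨H, hH⟩ := exists_krausMatrix_mul_vecMulVec_eq_mul fun Z hZ => (hcond Z hZ).1
  filter_upwards [eventually_isCP_krausMap_comp_PsiInv hG hH hx, Ioo_mem_nhdsGT one_pos]
    with lam hCP hlam
  exact ⟨hCP, by rw [LinearMap.comp_assoc, PsiInv_comp_Psi hlam.2 hx hxy, LinearMap.comp_id]⟩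

/-- sufficient criterion, explicit form. -/
theorem sufficient_criterion (n r : ℕ) (K : Fin r → Matrix (Fin n) (Fin n) ℂ)
    (Φ : Matrix (Fin n) (Fin n) ℂ →ₗ[ℂ] Matrix (Fin n) (Fin n) ℂ)
    (hKraus : ∀ ρ, Φ ρ = ∑ j, K j * ρ * (K j)ᴴ) (hΦ : IsChannel Φ)
    (x xp : Fin n → ℂ)
    (hx : star x ⬝ᵥ x = 1) (hxp : star xp ⬝ᵥ xp = 1) (horth : star x ⬝ᵥ xp = 0)
    (hcond : ∀ Z : Matrix (Fin n) (Fin n) ℂ, (∀ j, ((K j)ᴴ * Z).trace = 0) →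
      (Φ (Matrix.vecMulVec xp (star xp)) * Z) *ᵥ x = 0 ∧
      (Φ (Matrix.vecMulVec x (star x)) * Z) *ᵥ x = 0) :
    ∃ lam ∈ Set.Ioo (0 : ℝ) 1, IsCP (Φ ∘ₗ PsiInv lam x xp) ∧
      Φ = (Φ ∘ₗ PsiInv lam x xp) ∘ₗ Psi lam x xp := by
  obtain rfl : Φ = krausMap K := LinearMap.ext fun ρ => by rw [hKraus, krausMap_apply]
  obtain ⟨lam, h, hlam⟩ := ((sufficient_criterion_general K x xp hx horth hcond).and
    (Ioo_mem_nhdsGT one_pos)).exists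
  exact ⟨lam, hlam, h⟩

end
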